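/- Arrangement commutes with zipping: for all multisets m : Sym X K and n : Sym Y K, (mzip m n).bind arr = (arr m).bind (fun a => PMF.map (fun b => fun i => (a i, b i)) (arr n)), as distributions on Fin K → X × Y. -/

import Mathlib

universe u

/-- Accumulation: send a tuple to its multiset of values. -/
def acc {X : Type u} {K : ℕ} (v : Fin K → X) : Sym X K :=
  ⟨(List.ofFn v : List X), by simp⟩

/-- Pushforward of the uniform distribution on permutations under `σ ↦ v ∘ σ`. -/
noncomputable def perm {X : Type u} {K : ℕ} (v : Fin K → X) : PMF (Fin K → X) :=
  PMF.map (fun σ => v ∘ σ) (PMF.uniformOfFintype (Equiv.Perm (Fin K)))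

/-!
An arrangement `arr m` is exchangeable: its law is invariant under permuting the indices.
Zipping two independent exchangeable tuples gives an exchangeable tuple, since a permutation of the
zipped tuple permutes both factors. Rearranging a tuple by a uniformly random permutation does not
change an exchangeable law, and `arr ∘ acc = perm` is such a random rearrangement.
-/

theorem acc_surjective {X : Type u} {K : ℕ} :
    Function.Surjective (acc : (Fin K → X) → Sym X K) := by
  rintro ⟨⟨l⟩, rfl⟩
  exact ⟨l.get, Subtype.ext (congrArg Multiset.ofList (List.ofFn_get l))⟩

theorem map_equiv_uniformOfFintype {α β : Type*} [Fintype α] [Nonempty α] [Fintype β] [Nonempty β]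
    (e : α ≃ β) : (PMF.uniformOfFintype α).map e = PMF.uniformOfFintype β := by
  classical
  ext b
  simp [PMF.map_apply, Fintype.card_congr e, ← e.symm_apply_eq, eq_comm]

/-- Exchangeability of a random `ι`-indexed tuple with distribution `p`: permuting the indices
does not change the distribution. -/
def IsExchangeable {ι X : Type*} (p : PMF (ι → X)) : Prop :=
  ∀ ρ : Equiv.Perm ι, p.map (fun a => a ∘ ρ) = p

-- In `perm`, `σ` is elaborated as a function and the uniform law is coerced monadically to a law on
-- `Fin K → Fin K`; here `σ` ranges over `Equiv.Perm (Fin K)`.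
theorem perm_eq_map {X : Type u} {K : ℕ} (v : Fin K → X) :
    perm v = (PMF.uniformOfFintype (Equiv.Perm (Fin K))).map fun σ : Equiv.Perm (Fin K) => v ∘ σ :=
  PMF.map_comp (fun σ : Equiv.Perm (Fin K) => ⇑σ) _ fun σ => v ∘ σ

theorem isExchangeable_perm {X : Type u} {K : ℕ} (v : Fin K → X) : IsExchangeable (perm v) :=
  fun ρ => calc
    (perm v).map (fun a => a ∘ ρ)
        = ((PMF.uniformOfFintype (Equiv.Perm (Fin K))).map (Equiv.mulRight ρ)).map
            (fun σ : Equiv.Perm (Fin K) => v ∘ σ) := by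
          rw [perm_eq_map, PMF.map_comp, PMF.map_comp]
          rfl
    _ = perm v := by rw [map_equiv_uniformOfFintype, perm_eq_map]

namespace IsExchangeable

theorem bind_perm {X : Type u} {K : ℕ} {p : PMF (Fin K → X)} (hp : IsExchangeable p) :
    p.bind perm = p := by
  let U := PMF.uniformOfFintype (Equiv.Perm (Fin K))
  calc
    p.bind perm = p.bind fun a => U.map fun ρ : Equiv.Perm (Fin K) => a ∘ ρ :=
      congrArg p.bind (funext perm_eq_map)
    _ = U.bind fun ρ => p.map fun a => a ∘ ρ :=
      PMF.bind_comm p U fun a ρ => PMF.pure (a ∘ ρ)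
    _ = U.bind fun _ => p := congrArg U.bind (funext hp)
    _ = p := PMF.bind_const U p

theorem zip {ι X Y : Type*} {p : PMF (ι → X)} {q : PMF (ι → Y)}
    (hp : IsExchangeable p) (hq : IsExchangeable q) :
    IsExchangeable (p.bind fun a => q.map fun b i => (a i, b i)) := by
  intro ρ
  calc
    (p.bind fun a => q.map fun b i => (a i, b i)).map (fun c => c ∘ ρ)
        = p.bind fun a => (q.map fun b => b ∘ ρ).map fun b i => (a (ρ i), b i) := by
          simp only [PMF.map_bind, PMF.map_comp, Function.comp_def]
    _ = (p.map fun a => a ∘ ρ).bind fun a => q.map fun b i => (a i, b i) := by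
          rw [hq ρ, PMF.bind_map]
          rfl
    _ = p.bind fun a => q.map fun b i => (a i, b i) := by rw [hp ρ]

end IsExchangeable

/-- Arrangement commutes with zipping: arranging the multizip
`mzip m n = (arr m).bind (fun a => PMF.map (fun b => acc (fun i => (a i, b i))) (arr n))`
equals zipping the two arrangements pointwise. -/
theorem arr_mzip {X Y : Type u} {K : ℕ}
    (arr : {Z : Type u} → {n : ℕ} → Sym Z n → PMF (Fin n → Z))
    (harr : ∀ {Z : Type u} {n : ℕ} (v : Fin n → Z), arr (acc v) = perm v)
    (m : Sym X K) (n : Sym Y K) :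
    ((arr m).bind (fun a => PMF.map (fun b => acc (fun i => (a i, b i))) (arr n))).bind arr =
      (arr m).bind (fun a => PMF.map (fun b => fun i => (a i, b i)) (arr n)) := by
  have arr_exchangeable {Z : Type u} (s : Sym Z K) : IsExchangeable (arr s) := by
    obtain ⟨v, rfl⟩ := acc_surjective s
    exact harr v ▸ isExchangeable_perm v
  set zipped := (arr m).bind fun a => (arr n).map fun b i => (a i, b i) with zipped_def
  have zipped_exchangeable : IsExchangeable zipped :=
    (arr_exchangeable m).zip (arr_exchangeable n)
  calc
    ((arr m).bind fun a => (arr n).map fun b => acc fun i => (a i, b i)).bind arr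
        = (zipped.map acc).bind arr := by
      simp only [zipped_def, PMF.map_bind, PMF.map_comp, Function.comp_def]
    _ = zipped.bind perm := by
      rw [PMF.bind_map, funext (f := arr ∘ acc) harr]
    _ = zipped := zipped_exchangeable.bind_perm
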